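/- The middle convolution preserves the index of rigidity: Let n ≥ 1, r ≥ 1 and let A = (A_1, …, A_r) ∈ GL_n(ℂ)^r be an irreducible tuple such that, in case n = 1, at least two of the A_i differ from the identity. Then for every λ ∈ ℂ with λ ∉ {0, 1}, one has i(A) = i(MC_λ(A)), where for a tuple M = (M_1, …, M_r) of automorphisms of a finite-dimensional complex vector space W with N = dim_ℂ W, the index of rigidity is i(M) := (r−1)·N² + 2 − ∑_{i=1}^{r+1} dim_ℂ{X ∈ End_ℂ(W) : X M_i = M_i X}, with M_{r+1} := (M_1 ⋯ M_r)^{-1}. -/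

import Mathlib

open Matrix

noncomputable section

/-- The block matrix `B_k` of the convolution construction: it agrees with the identity
in all block rows except the `k`-th, whose block entries are
`(λ(A_1 − I), …, λ(A_{k−1} − I), λA_k, A_{k+1} − I, …, A_r − I)`. -/
def Bmat {n r : ℕ} (A : Fin r → Matrix (Fin n) (Fin n) ℂ) (lam : ℂ) (k : Fin r) :
    Matrix (Fin r × Fin n) (Fin r × Fin n) ℂ :=
  Matrix.of fun p q =>
    if p.1 = k then
      (if q.1 < k then lam * (A q.1 - 1) p.2 q.2
       else if q.1 = k then lam * (A k) p.2 q.2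
       else (A q.1 - 1) p.2 q.2)
    else (1 : Matrix (Fin r × Fin n) (Fin r × Fin n) ℂ) p q

/-- Projection onto the `k`-th block of `(ℂⁿ)^r`. -/
def blockProj {n r : ℕ} (k : Fin r) : ((Fin r × Fin n) → ℂ) →ₗ[ℂ] (Fin n → ℂ) :=
  LinearMap.funLeft ℂ ℂ fun b => (k, b)

/-- `K = K_1 ⊕ ⋯ ⊕ K_r`, where `K_k` is the `k`-th block copy of `ker (A_k − I)`. -/
def Ksub {n r : ℕ} (A : Fin r → Matrix (Fin n) (Fin n) ℂ) :
    Submodule ℂ ((Fin r × Fin n) → ℂ) :=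
  ⨅ k : Fin r, LinearMap.ker (((A k - 1).mulVecLin).comp (blockProj k))

/-- `L = ∩_k ker (B_k − I)`. -/
def Lsub {n r : ℕ} (A : Fin r → Matrix (Fin n) (Fin n) ℂ) (lam : ℂ) :
    Submodule ℂ ((Fin r × Fin n) → ℂ) :=
  ⨅ k : Fin r, LinearMap.ker ((Bmat A lam k).mulVecLin - LinearMap.id)

/-- The underlying space `V = (ℂⁿ)^r / (K + L)` of the middle convolution `MC_λ(A)`. -/
abbrev MCspace {n r : ℕ} (A : Fin r → Matrix (Fin n) (Fin n) ℂ) (lam : ℂ) :=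
  ((Fin r × Fin n) → ℂ) ⧸ (Ksub A ⊔ Lsub A lam)

/-- A tuple of endomorphisms of `W` is irreducible if the only subspaces of `W` invariant
under every member are `0` and `W`. -/
def IrredEndos {W : Type*} [AddCommGroup W] [Module ℂ W] {r : ℕ}
    (M : Fin r → W →ₗ[ℂ] W) : Prop :=
  ∀ U : Submodule ℂ W, (∀ k, ∀ v ∈ U, M k v ∈ U) → U = ⊥ ∨ U = ⊤


/-- The centralizer `{X ∈ End(W) : X f = f X}` of an endomorphism `f`, as a subspace. -/
def centEnd {W : Type*} [AddCommGroup W] [Module ℂ W] (f : Module.End ℂ W) :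
    Submodule ℂ (Module.End ℂ W) where
  carrier := {X | X * f = f * X}
  add_mem' := by
    intro X Y hX hY
    simp only [Set.mem_setOf_eq] at *
    rw [add_mul, mul_add, hX, hY]
  zero_mem' := by
    simp only [Set.mem_setOf_eq, zero_mul, mul_zero]
  smul_mem' := by
    intro c X hX
    simp only [Set.mem_setOf_eq] at *
    rw [smul_mul_assoc, mul_smul_comm, hX]

/-- The index of rigidity of a tuple `M = (M_1, …, M_r)` of automorphisms of a
finite-dimensional complex vector space `W` of dimension `N`:
`i(M) = (r − 1)·N² + 2 − ∑_{i=1}^{r+1} dim {X : X M_i = M_i X}`, where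
`M_{r+1} = (M_1 ⋯ M_r)⁻¹`. -/
def rigIdx {W : Type*} [AddCommGroup W] [Module ℂ W] {r : ℕ}
    (M : Fin r → Module.End ℂ W) : ℤ :=
  ((r : ℤ) - 1) * (Module.finrank ℂ W : ℤ) ^ 2 + 2
    - (∑ k : Fin r, (Module.finrank ℂ (centEnd (M k)) : ℤ))
    - (Module.finrank ℂ (centEnd (Ring.inverse ((List.ofFn M).prod))) : ℤ)

section helpers

variable {V U T : Type*} [AddCommGroup V] [Module ℂ V] [AddCommGroup U] [Module ℂ U]
  [AddCommGroup T] [Module ℂ T]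

lemma mem_centEnd {f X : Module.End ℂ V} : X ∈ centEnd f ↔ X * f = f * X := Iff.rfl

lemma centEnd_affine (f g : Module.End ℂ V) (c d : ℂ) (hc : c ≠ 0) (h : g = c • f + d • 1) :
    centEnd g = centEnd f := by
  ext X
  rw [mem_centEnd, mem_centEnd, h]
  simp only [mul_add, add_mul, mul_smul_comm, smul_mul_assoc, mul_one, one_mul, add_left_inj]
  exact (smul_right_injective _ hc).eq_iff

lemma centEnd_inverse (f : Module.End ℂ V) (hf : IsUnit f) :
    centEnd (Ring.inverse f) = centEnd f := by
  obtain ⟨u, rfl⟩ := hf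
  ext X
  rw [mem_centEnd, mem_centEnd, Ring.inverse_unit]
  exact Commute.units_inv_right_iff

lemma cent_pq [FiniteDimensional ℂ V] [FiniteDimensional ℂ U] (p : V →ₗ[ℂ] U) (q : U →ₗ[ℂ] V)
    (hp : Function.Surjective p) (hq : Function.Injective q) :
    (Module.finrank ℂ (centEnd (q ∘ₗ p : Module.End ℂ V)) : ℤ)
      = Module.finrank ℂ (centEnd (p ∘ₗ q : Module.End ℂ U))
        + ((Module.finrank ℂ V : ℤ) - Module.finrank ℂ U) ^ 2 := by
  obtain ⟨σ, hσ⟩ := p.exists_rightInverse_of_surjective (LinearMap.range_eq_top.2 hp)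
  obtain ⟨τ, hτ⟩ := q.exists_leftInverse_of_injective (LinearMap.ker_eq_bot.2 hq)
  have hσ' : ∀ u, p (σ u) = u := fun u => LinearMap.congr_fun hσ u
  have hτ' : ∀ u, τ (q u) = u := fun u => LinearMap.congr_fun hτ u
  have key1 : ∀ X ∈ centEnd (q ∘ₗ p : Module.End ℂ V), ∀ v, p (X v) = p (X (σ (p v))) := by
    intro X hX v
    have h1 : ∀ w, X (q (p w)) = q (p (X w)) := fun w => LinearMap.congr_fun hX w
    apply hq
    rw [← h1, ← h1, hσ']
  have key2 : ∀ X ∈ centEnd (q ∘ₗ p : Module.End ℂ V), ∀ u, X (q u) = q (p (X (σ u))) := by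
    intro X hX u
    have h1 : ∀ w, X (q (p w)) = q (p (X w)) := fun w => LinearMap.congr_fun hX w
    rw [← h1, hσ']
  let Φ0 : Module.End ℂ V →ₗ[ℂ] Module.End ℂ U :=
    { toFun := fun X => p ∘ₗ X ∘ₗ σ
      map_add' := by intro X Y; ext; simp
      map_smul' := by intro c X; ext; simp }
  have hΦ0 : ∀ X u, Φ0 X u = p (X (σ u)) := fun _ _ => rfl
  let Φ : centEnd (q ∘ₗ p : Module.End ℂ V) →ₗ[ℂ] centEnd (p ∘ₗ q : Module.End ℂ U) :=
    LinearMap.codRestrict _ (Φ0 ∘ₗ Submodule.subtype _) (by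
      rintro ⟨X, hX⟩
      rw [mem_centEnd]
      ext u
      change p (X (σ (p (q u)))) = p (q (p (X (σ u))))
      rw [← key1 X hX, key2 X hX])
  have hΦ : ∀ X u, (Φ X : Module.End ℂ U) u = p (X.1 (σ u)) := fun _ _ => rfl
  have hsurj : Function.Surjective Φ := by
    rintro ⟨Y, hY⟩
    have hY' : ∀ u, Y (p (q u)) = p (q (Y u)) := fun u => LinearMap.congr_fun hY u
    let X : Module.End ℂ V := q ∘ₗ Y ∘ₗ τ + σ ∘ₗ Y ∘ₗ p - σ ∘ₗ p ∘ₗ q ∘ₗ Y ∘ₗ τ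
    have hX : ∀ v, X v = q (Y (τ v)) + σ (Y (p v)) - σ (p (q (Y (τ v)))) := fun _ => rfl
    have h1 : ∀ v, p (X v) = Y (p v) := by
      intro v; rw [hX]; simp [hσ']
    have h2 : ∀ u, X (q u) = q (Y u) := by
      intro v; rw [hX]; simp [hτ', hY']
    refine ⟨⟨X, ?_⟩, ?_⟩
    · rw [mem_centEnd]
      ext v
      change X (q (p v)) = q (p (X v))
      rw [h1, h2]
    · apply Subtype.ext
      ext u
      rw [hΦ]
      simp [h1, hσ']
  let Ψ0 : ((V ⧸ LinearMap.range q) →ₗ[ℂ] LinearMap.ker p) →ₗ[ℂ] Module.End ℂ V :=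
    { toFun := fun Z => (LinearMap.ker p).subtype ∘ₗ Z ∘ₗ (LinearMap.range q).mkQ
      map_add' := by intro X Y; ext; simp
      map_smul' := by intro c X; ext; simp }
  have hΨ0 : ∀ Z v, Ψ0 Z v = (Z ((LinearMap.range q).mkQ v) : V) := fun _ _ => rfl
  have hmk : ∀ u, (LinearMap.range q).mkQ (q u) = 0 := by
    intro u; simp
  have hΨp : ∀ Z v, p (Ψ0 Z v) = 0 := fun Z v => (Z ((LinearMap.range q).mkQ v)).2
  have hΨq : ∀ Z u, Ψ0 Z (q u) = 0 := by
    intro Z u; rw [hΨ0, hmk]; simp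
  let Ψ : ((V ⧸ LinearMap.range q) →ₗ[ℂ] LinearMap.ker p) →ₗ[ℂ]
      centEnd (q ∘ₗ p : Module.End ℂ V) :=
    LinearMap.codRestrict _ Ψ0 (by
      intro Z
      rw [mem_centEnd]
      ext v
      change Ψ0 Z (q (p v)) = q (p (Ψ0 Z v))
      rw [hΨp, hΨq, map_zero])
  have hΨinj : Function.Injective Ψ := by
    rw [← LinearMap.ker_eq_bot, LinearMap.ker_eq_bot']
    intro Z hZ
    ext v
    exact LinearMap.congr_fun (congrArg Subtype.val hZ) v
  have hrk : LinearMap.range Ψ = LinearMap.ker Φ := by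
    apply le_antisymm
    · rintro _ ⟨Z, rfl⟩
      rw [LinearMap.mem_ker]
      apply Subtype.ext
      ext u
      rw [hΦ]
      exact hΨp Z (σ u)
    · rintro ⟨X, hX⟩ h
      have h0 : ∀ u, p (X (σ u)) = 0 := fun u =>
        LinearMap.congr_fun (congrArg Subtype.val (LinearMap.mem_ker.1 h)) u
      refine ⟨(LinearMap.range q).liftQ (X.codRestrict (LinearMap.ker p) ?_) ?_, ?_⟩
      · intro v
        rw [LinearMap.mem_ker, key1 X hX, h0]
      · rintro _ ⟨u, rfl⟩
        rw [LinearMap.mem_ker]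
        apply Subtype.ext
        change X (q u) = 0
        rw [key2 X hX, h0, map_zero]
      · apply Subtype.ext
        ext v
        rfl
  have e1 := LinearMap.finrank_range_add_finrank_ker Φ
  rw [LinearMap.range_eq_top.2 hsurj, finrank_top, ← hrk, LinearMap.finrank_range_of_inj hΨinj,
    Module.finrank_linearMap] at e1
  have e2 := LinearMap.finrank_range_add_finrank_ker p
  rw [LinearMap.range_eq_top.2 hp, finrank_top] at e2
  have e3 := Submodule.finrank_quotient_add_finrank (LinearMap.range q)
  rw [LinearMap.finrank_range_of_inj hq] at e3
  have e4 : (Module.finrank ℂ (V ⧸ LinearMap.range q) : ℤ)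
    = (Module.finrank ℂ V : ℤ) - Module.finrank ℂ U := by omega
  have e5 : (Module.finrank ℂ (LinearMap.ker p) : ℤ)
    = (Module.finrank ℂ V : ℤ) - Module.finrank ℂ U := by omega
  rw [← e1]
  push_cast
  rw [e4, e5]
  ring

lemma cent_half [FiniteDimensional ℂ V] [FiniteDimensional ℂ T] (f : Module.End ℂ V)
    (q : T →ₗ[ℂ] V) (N : Submodule ℂ T) (hN : LinearMap.ker q = N)
    (hr : LinearMap.range q = LinearMap.range f) (h : Module.End ℂ (T ⧸ N))
    (hh : ∀ t s, h (N.mkQ t) = N.mkQ s → f (q t) = q s) :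
    (Module.finrank ℂ (centEnd f) : ℤ)
      = Module.finrank ℂ (centEnd h)
        + ((Module.finrank ℂ V : ℤ) - (Module.finrank ℂ T - Module.finrank ℂ N)) ^ 2 := by
  subst hN
  let q' := (LinearMap.ker q).liftQ q le_rfl
  have hq' : ∀ t, q' ((LinearMap.ker q).mkQ t) = q t := fun t => rfl
  have hinj : Function.Injective q' := by
    rw [← LinearMap.ker_eq_bot]
    exact Submodule.ker_liftQ_eq_bot _ _ _ le_rfl
  have hrange : LinearMap.range q' = LinearMap.range f := by
    rw [← hr]; exact Submodule.range_liftQ _ _ _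
  let p : V →ₗ[ℂ] (T ⧸ LinearMap.ker q) :=
    (LinearEquiv.ofInjective q' hinj).symm ∘ₗ
      (f.codRestrict (LinearMap.range q') (fun v => by rw [hrange]; exact ⟨v, rfl⟩))
  have hqp : ∀ v, q' (p v) = f v := by
    intro v
    have := LinearEquiv.apply_symm_apply (LinearEquiv.ofInjective q' hinj)
      (f.codRestrict (LinearMap.range q') (fun v => by rw [hrange]; exact ⟨v, rfl⟩) v)
    exact congrArg Subtype.val this
  have hp : Function.Surjective p := by
    intro u
    have : q' u ∈ LinearMap.range f := by rw [← hrange]; exact ⟨u, rfl⟩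
    obtain ⟨v, hv⟩ := this
    exact ⟨v, hinj (by rw [hqp, hv])⟩
  have e1 : (q' ∘ₗ p : Module.End ℂ V) = f := LinearMap.ext hqp
  have e2 : (p ∘ₗ q' : Module.End ℂ _) = h := by
    apply LinearMap.ext
    intro u
    obtain ⟨t, rfl⟩ := Submodule.mkQ_surjective _ u
    obtain ⟨s, hs⟩ := Submodule.mkQ_surjective _ (h ((LinearMap.ker q).mkQ t))
    apply hinj
    change q' (p (q' _)) = _
    rw [hqp, hq', ← hs, hq']
    exact hh t s hs.symm
  have := cent_pq p q' hp hinj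
  rw [e1, e2] at this
  rw [this]
  have e3 := Submodule.finrank_quotient_add_finrank (LinearMap.ker q)
  have e4 : (Module.finrank ℂ (T ⧸ LinearMap.ker q) : ℤ)
    = (Module.finrank ℂ T : ℤ) - Module.finrank ℂ (LinearMap.ker q) := by omega
  rw [e4]

lemma cent_compare [FiniteDimensional ℂ V] [FiniteDimensional ℂ U] [FiniteDimensional ℂ T]
    (f : Module.End ℂ V) (f' : Module.End ℂ U)
    (q : T →ₗ[ℂ] V) (q' : T →ₗ[ℂ] U) (hker : LinearMap.ker q' = LinearMap.ker q)
    (hr : LinearMap.range q = LinearMap.range f) (hr' : LinearMap.range q' = LinearMap.range f')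
    (h : Module.End ℂ T) (hf : ∀ t, f (q t) = q (h t))
    (c d : ℂ) (hc : c ≠ 0) (hf' : ∀ t, f' (q' t) = q' (c • h t + d • t)) :
    (Module.finrank ℂ (centEnd f) : ℤ) - ((Module.finrank ℂ V : ℤ)
        - (Module.finrank ℂ T - Module.finrank ℂ (LinearMap.ker q))) ^ 2
      = (Module.finrank ℂ (centEnd f') : ℤ) - ((Module.finrank ℂ U : ℤ)
        - (Module.finrank ℂ T - Module.finrank ℂ (LinearMap.ker q))) ^ 2 := by
  have hinv : LinearMap.ker q ≤ (LinearMap.ker q).comap h := by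
    intro t ht
    rw [LinearMap.mem_ker] at ht
    rw [Submodule.mem_comap, LinearMap.mem_ker, ← hf, ht, map_zero]
  let h1 : Module.End ℂ (T ⧸ LinearMap.ker q) := (LinearMap.ker q).mapQ _ h hinv
  have hh1 : ∀ t, h1 ((LinearMap.ker q).mkQ t) = (LinearMap.ker q).mkQ (h t) := fun t => rfl
  rw [cent_half f q _ rfl hr h1, cent_half f' q' _ hker hr' (c • h1 + d • 1),
    centEnd_affine h1 _ c d hc rfl]
  · ring
  · intro t s hts
    have : (LinearMap.ker q).mkQ (c • h t + d • t) = (LinearMap.ker q).mkQ s := by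
      rw [← hts]; simp [h1]
    rw [hf']
    rw [← sub_eq_zero, ← map_sub, ← LinearMap.mem_ker, hker]
    exact (Submodule.Quotient.eq _).1 this
  · intro t s hts
    rw [hh1] at hts
    rw [hf, ← sub_eq_zero, ← map_sub, ← LinearMap.mem_ker]
    exact (Submodule.Quotient.eq _).1 hts

end helpers

section conv

variable {V T : Type*} [AddCommGroup V] [Module ℂ V] [AddCommGroup T] [Module ℂ T] {r : ℕ}

/-- tail products -/
def tailP {W : Type*} [AddCommGroup W] [Module ℂ W] (a : Fin r → Module.End ℂ W) (m : ℕ) :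
    Module.End ℂ W := ((List.ofFn a).drop m).prod

lemma tailP_top (a : Fin r → Module.End ℂ T) : tailP a r = 1 := by
  unfold tailP
  rw [List.drop_of_length_le (by simp)]
  simp

lemma tailP_step (a : Fin r → Module.End ℂ T) (k : ℕ) (hk : k < r) :
    tailP a k = a ⟨k, hk⟩ * tailP a (k + 1) := by
  unfold tailP
  rw [List.drop_eq_getElem_cons (by simpa using hk)]
  simp

/-- tail sums -/
def tailS (a : Fin r → Module.End ℂ T) (m : ℕ) : (Fin r → T) →ₗ[ℂ] T :=
  ∑ j : Fin r, (if m ≤ (j : ℕ) then (a j - 1) ∘ₗ LinearMap.proj j else 0)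

lemma tailS_apply (a : Fin r → Module.End ℂ T) (m : ℕ) (v : Fin r → T) :
    tailS a m v = ∑ j : Fin r, (if m ≤ (j : ℕ) then a j (v j) - v j else 0) := by
  unfold tailS
  rw [LinearMap.sum_apply]
  refine Finset.sum_congr rfl fun j _ => ?_
  split_ifs <;> simp

lemma tailS_top (a : Fin r → Module.End ℂ T) (v : Fin r → T) : tailS a r v = 0 := by
  rw [tailS_apply]
  refine Finset.sum_eq_zero fun j _ => ?_
  rw [if_neg (by omega)]

lemma tailS_step (a : Fin r → Module.End ℂ T) (m : ℕ) (hm : m < r) (v : Fin r → T) :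
    tailS a m v = a ⟨m, hm⟩ (v ⟨m, hm⟩) - v ⟨m, hm⟩ + tailS a (m + 1) v := by
  rw [tailS_apply, tailS_apply]
  have : a ⟨m, hm⟩ (v ⟨m, hm⟩) - v ⟨m, hm⟩
      = ∑ j : Fin r, if j = ⟨m, hm⟩ then a j (v j) - v j else 0 := by simp
  rw [this, ← Finset.sum_add_distrib]
  refine Finset.sum_congr rfl fun j _ => ?_
  by_cases h1 : j = ⟨m, hm⟩
  · subst h1; simp
  · have : (j : ℕ) ≠ m := fun h => h1 (Fin.ext h)
    by_cases h2 : m ≤ (j : ℕ)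
    · rw [if_pos h2, if_neg h1, if_pos (by omega), zero_add]
    · rw [if_neg h2, if_neg h1, if_neg (by omega), zero_add]

lemma tailS_congr (a : Fin r → Module.End ℂ T) (m : ℕ) (v w : Fin r → T)
    (h : ∀ j : Fin r, m ≤ (j : ℕ) → v j = w j) : tailS a m v = tailS a m w := by
  rw [tailS_apply, tailS_apply]
  refine Finset.sum_congr rfl fun j _ => ?_
  split_ifs with hj
  · rw [h j hj]
  · rfl

lemma tailS_diff (a : Fin r → Module.End ℂ T) (m : ℕ) (v w : Fin r → T)
    (h : ∀ j : Fin r, (j : ℕ) < m → v j = w j) :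
    tailS a 0 v - tailS a m v = tailS a 0 w - tailS a m w := by
  simp only [tailS_apply, ← Finset.sum_sub_distrib]
  refine Finset.sum_congr rfl fun j _ => ?_
  by_cases hj : m ≤ (j : ℕ)
  · simp [hj]
  · rw [h j (by omega)]

lemma tailS_single (a : Fin r → Module.End ℂ T) (m : ℕ) (j : Fin r) (t : T) :
    tailS a m (Pi.single j t) = if m ≤ (j : ℕ) then a j t - t else 0 := by
  rw [tailS_apply, Finset.sum_eq_single j]
  · simp
  · intro b _ hb
    simp [Pi.single_eq_of_ne hb]
  · simp

/-- the map `s ↦ (A_2 ⋯ A_r s, …, s)` -/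
def Qm (a : Fin r → Module.End ℂ T) : T →ₗ[ℂ] (Fin r → T) :=
  LinearMap.pi fun j => tailP a ((j : ℕ) + 1)

lemma Qm_apply (a : Fin r → Module.End ℂ T) (t : T) (j : Fin r) :
    Qm a t j = tailP a ((j : ℕ) + 1) t := rfl

lemma tailS_Qm (a : Fin r → Module.End ℂ T) (t : T) (m : ℕ) (hm : m ≤ r) :
    tailS a m (Qm a t) = tailP a m t - t := by
  induction hm using Nat.decreasingInduction with
  | self => rw [tailS_top, tailP_top]; simp
  | of_succ k hk ih =>
    rw [tailS_step a k hk, ih, Qm_apply, tailP_step a k hk]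
    simp

/-- the `k`-th row of `B_k - 1` -/
def rho (a : Fin r → Module.End ℂ T) (lam : ℂ) (k : Fin r) : (Fin r → T) →ₗ[ℂ] T :=
  lam • tailS a 0 + (1 - lam) • tailS a ((k : ℕ) + 1) + (lam - 1) • LinearMap.proj k

lemma rho_apply (a : Fin r → Module.End ℂ T) (lam : ℂ) (k : Fin r) (v : Fin r → T) :
    rho a lam k v
      = lam • tailS a 0 v + (1 - lam) • tailS a ((k : ℕ) + 1) v + (lam - 1) • v k := rfl

lemma prod_formula (a : Fin r → Module.End ℂ T) (lam : ℂ) (π : (Fin r → T) →ₗ[ℂ] V)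
    (M : Fin r → Module.End ℂ V)
    (hM : ∀ k v, M k (π v) = π (v + Pi.single k (rho a lam k v))) (v : Fin r → T)
    (m : ℕ) (hm : m ≤ r) :
    tailP M m (π v) = π (fun j => if m ≤ (j : ℕ) then
      lam • v j + lam • Qm a (tailS a 0 v) j else v j) := by
  induction hm using Nat.decreasingInduction with
  | self =>
    rw [tailP_top]
    simp only [Module.End.one_apply]
    congr 1
    ext j
    rw [if_neg (by omega)]
  | of_succ k hk ih =>
    rw [tailP_step M k hk, Module.End.mul_apply, ih, hM]
    set w : Fin r → T := fun j => if k + 1 ≤ (j : ℕ) then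
      lam • v j + lam • Qm a (tailS a 0 v) j else v j with hw
    have h1 : tailS a (k + 1) w = tailS a (k + 1) (lam • v + lam • Qm a (tailS a 0 v)) := by
      apply tailS_congr
      intro j hj
      rw [hw]; simp only [if_pos hj]; rfl
    rw [map_add, map_smul, map_smul, tailS_Qm a _ _ hk] at h1
    have h2 : tailS a 0 w - tailS a (k + 1) w = tailS a 0 v - tailS a (k + 1) v := by
      apply tailS_diff
      intro j hj
      rw [hw]; simp only; rw [if_neg (by omega)]
    have h3 : w ⟨k, hk⟩ = v ⟨k, hk⟩ := by
      rw [hw]; simp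
    have h4 : rho a lam ⟨k, hk⟩ w
        = lam • tailP a (k + 1) (tailS a 0 v) + (lam - 1) • v ⟨k, hk⟩ := by
      rw [rho_apply, h3]
      simp only
      have h5 : tailS a 0 w = tailS a 0 v - tailS a (k + 1) v + tailS a (k + 1) w := by
        rw [← h2]; abel
      rw [h5, h1]
      module
    congr 1
    ext j
    rw [h4]
    by_cases hj : j = ⟨k, hk⟩
    · subst hj
      simp only [Pi.add_apply, Pi.single_eq_same, h3, le_refl, if_true, Qm_apply]
      module
    · have : (j : ℕ) ≠ k := fun h => hj (Fin.ext h)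
      rw [Pi.add_apply, Pi.single_eq_of_ne hj, add_zero, hw]
      by_cases h : k ≤ (j : ℕ)
      · simp only [if_pos h]
        rw [if_pos (by omega)]
      · simp only [if_neg h]
        rw [if_neg (by omega)]

lemma L_char (a : Fin r → Module.End ℂ T) (lam : ℂ) (hl1 : lam ≠ 1)
    (v : Fin r → T) :
    (∀ k, rho a lam k v = 0) ↔ ∃ t, lam • tailP a 0 t = t ∧ v = Qm a t := by
  have hl1' : 1 - lam ≠ 0 := sub_ne_zero.2 (Ne.symm hl1)
  constructor
  · intro h
    let M : Fin r → Module.End ℂ (Fin r → T) :=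
      fun k => LinearMap.id + LinearMap.single ℂ (fun _ => T) k ∘ₗ rho a lam k
    have hM : ∀ k w, M k w = w + Pi.single k (rho a lam k w) := fun k w => rfl
    have hfix : ∀ m, m ≤ r → tailP M m v = v := by
      intro m hm
      induction hm using Nat.decreasingInduction with
      | self => rw [tailP_top]; rfl
      | of_succ k hk ih =>
        rw [tailP_step M k hk, Module.End.mul_apply, ih, hM, h]
        simp
    have h1 := prod_formula a lam LinearMap.id M hM v 0 (Nat.zero_le _)
    simp only [LinearMap.id_apply] at h1
    rw [hfix 0 (Nat.zero_le _)] at h1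
    have h2 : (1 - lam) • v = lam • Qm a (tailS a 0 v) := by
      ext j
      have := congrFun h1 j
      simp only [Nat.zero_le, if_true] at this
      simp only [Pi.smul_apply]
      rw [sub_smul, one_smul]
      nth_rewrite 1 [this]
      abel
    have h3 : v = Qm a ((1 - lam)⁻¹ • lam • tailS a 0 v) := by
      rw [map_smul, map_smul, ← h2, smul_smul, inv_mul_cancel₀ hl1', one_smul]
    refine ⟨_, ?_, h3⟩
    set t := (1 - lam)⁻¹ • lam • tailS a 0 v with ht
    have h4 : (1 - lam) • t = lam • tailS a 0 v := by
      rw [ht, smul_smul, mul_inv_cancel₀ hl1', one_smul]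
    rw [h3, tailS_Qm a t 0 (Nat.zero_le _)] at h4
    have : lam • tailP a 0 t = (1 - lam) • t + lam • t := by
      rw [h4]; module
    rw [this]; module
  · rintro ⟨t, ht, rfl⟩ k
    rw [rho_apply, tailS_Qm a t 0 (Nat.zero_le _), tailS_Qm a t _ (by omega), Qm_apply,
      smul_sub, ht]
    module

lemma rho_single (a : Fin r → Module.End ℂ T) (lam : ℂ) (k j : Fin r) (t : T) :
    rho a lam k (Pi.single j t) = if j = k then lam • a k t - t else
      (if j < k then lam else 1) • (a j t - t) := by
  rw [rho_apply, tailS_single, tailS_single, if_pos (Nat.zero_le _)]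
  by_cases h : j = k
  · subst h
    simp
    module
  · have h' : (j : ℕ) ≠ k := fun e => h (Fin.ext e)
    rw [if_neg h, Pi.single_eq_of_ne (Ne.symm h)]
    by_cases h2 : j < k
    · have : (j : ℕ) < k := h2
      rw [if_pos h2, if_neg (by omega)]
      module
    · have : ¬ (j : ℕ) < k := h2
      rw [if_neg h2, if_pos (by omega)]
      module

/-- dimension count -/
lemma dim_formula [FiniteDimensional ℂ V] [FiniteDimensional ℂ T]
    (a : Fin r → Module.End ℂ T) (lam : ℂ) (hr : 1 ≤ r) (hl1 : lam ≠ 1)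
    (π : (Fin r → T) →ₗ[ℂ] V) (hπ : Function.Surjective π)
    (hker : ∀ v, π v = 0 ↔ ∃ κ l : Fin r → T, (∀ j, a j (κ j) = κ j) ∧
      (∀ k, rho a lam k l = 0) ∧ v = κ + l) :
    Module.finrank ℂ V + ∑ k, Module.finrank ℂ (LinearMap.ker (a k - 1))
      + Module.finrank ℂ (LinearMap.ker (lam • tailP a 0 - 1)) = r * Module.finrank ℂ T := by
  let Θ : ((∀ k, LinearMap.ker (a k - 1)) × LinearMap.ker (lam • tailP a 0 - 1))
      →ₗ[ℂ] (Fin r → T) :=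
    LinearMap.coprod (LinearMap.pi fun k => (LinearMap.ker (a k - 1)).subtype ∘ₗ LinearMap.proj k)
      (Qm a ∘ₗ Submodule.subtype _)
  have hΘ : ∀ x j, Θ x j = (x.1 j : T) + Qm a (x.2 : T) j := fun x j => rfl
  have hmem : ∀ k (t : T), t ∈ LinearMap.ker (a k - 1) ↔ a k t = t := by
    intro k t; rw [LinearMap.mem_ker, LinearMap.sub_apply, sub_eq_zero]; rfl
  have hmemE : ∀ (t : T), t ∈ LinearMap.ker (lam • tailP a 0 - 1) ↔ lam • tailP a 0 t = t := by
    intro t; rw [LinearMap.mem_ker, LinearMap.sub_apply, sub_eq_zero]; rfl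
  have hinj : Function.Injective Θ := by
    rw [← LinearMap.ker_eq_bot, LinearMap.ker_eq_bot']
    rintro ⟨κ, t⟩ h
    have h0 : ∀ j, (κ j : T) + Qm a (t : T) j = 0 := fun j => congrFun h j
    have hQ : ∀ j, a j (Qm a (t : T) j) = Qm a (t : T) j := by
      intro j
      have : Qm a (t : T) j = -(κ j : T) := eq_neg_of_add_eq_zero_right (h0 j)
      rw [this, map_neg, (hmem j _).1 (κ j).2]
    have hS : ∀ m, tailS a m (Qm a (t : T)) = 0 := by
      intro m
      rw [tailS_apply]
      refine Finset.sum_eq_zero fun j _ => ?_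
      rw [hQ]; simp
    have hz : ∀ k, Qm a (t : T) k = 0 := by
      intro k
      have := (L_char a lam hl1 (Qm a (t : T))).2 ⟨t, (hmemE _).1 t.2, rfl⟩ k
      rw [rho_apply, hS, hS, smul_zero, smul_zero, zero_add, zero_add] at this
      exact (smul_eq_zero.1 this).resolve_left (sub_ne_zero.2 hl1)
    have ht : (t : T) = 0 := by
      have := hz ⟨r - 1, by omega⟩
      rw [Qm_apply] at this
      simp only at this
      rw [Nat.sub_add_cancel hr, tailP_top] at this
      exact this
    ext j
    · have := h0 j
      rw [hz, add_zero] at this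
      exact this
    · exact ht
  have hrange : LinearMap.range Θ = LinearMap.ker π := by
    apply le_antisymm
    · rintro _ ⟨⟨κ, t⟩, rfl⟩
      rw [LinearMap.mem_ker, hker]
      exact ⟨fun j => κ j, Qm a t, fun j => (hmem j _).1 (κ j).2,
        (L_char a lam hl1 _).2 ⟨t, (hmemE _).1 t.2, rfl⟩, rfl⟩
    · intro v hv
      rw [LinearMap.mem_ker, hker] at hv
      obtain ⟨κ, l, hκ, hl, rfl⟩ := hv
      obtain ⟨t, ht, rfl⟩ := (L_char a lam hl1 _).1 hl
      exact ⟨⟨fun j => ⟨κ j, (hmem j _).2 (hκ j)⟩, ⟨t, (hmemE _).2 ht⟩⟩, rfl⟩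
  have e1 := LinearMap.finrank_range_add_finrank_ker π
  rw [LinearMap.range_eq_top.2 hπ, finrank_top, ← hrange, LinearMap.finrank_range_of_inj hinj,
    Module.finrank_prod, Module.finrank_pi_fintype, Module.finrank_pi_fintype] at e1
  rw [← add_assoc] at e1
  rw [e1]
  simp

theorem abstract_main [FiniteDimensional ℂ V] [FiniteDimensional ℂ T]
    (a : Fin r → Module.End ℂ T) (lam : ℂ) (hr : 1 ≤ r) (hl0 : lam ≠ 0) (hl1 : lam ≠ 1)
    (hunit : ∀ k, IsUnit (a k))
    (star : ∀ (k : Fin r) (c : ℂ), c ≠ 0 → ∀ t : T, (∀ j, j ≠ k → a j t = t) →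
      c • a k t = t → t = 0)
    (dstar : ∀ (k : Fin r) (c : ℂ), c ≠ 0 → ∀ W : Submodule ℂ T,
      (∀ j, j ≠ k → ∀ t, a j t - t ∈ W) → (∀ t, c • a k t - t ∈ W) → W = ⊤)
    (π : (Fin r → T) →ₗ[ℂ] V) (hπ : Function.Surjective π)
    (hker : ∀ v, π v = 0 ↔ ∃ κ l : Fin r → T, (∀ j, a j (κ j) = κ j) ∧
      (∀ k, rho a lam k l = 0) ∧ v = κ + l)
    (M : Fin r → Module.End ℂ V)
    (hM : ∀ k v, M k (π v) = π (v + Pi.single k (rho a lam k v)))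
    (hMunit : ∀ k, IsUnit (M k)) :
    rigIdx a = rigIdx M := by
  have hdim := dim_formula a lam hr hl1 π hπ hker
  -- local comparison
  have hloc : ∀ k, (Module.finrank ℂ (centEnd (a k)) : ℤ) - ((Module.finrank ℂ T : ℤ)
        - (Module.finrank ℂ T - Module.finrank ℂ (LinearMap.ker (a k - 1)))) ^ 2
      = (Module.finrank ℂ (centEnd (M k)) : ℤ) - ((Module.finrank ℂ V : ℤ)
        - (Module.finrank ℂ T - Module.finrank ℂ (LinearMap.ker (a k - 1)))) ^ 2 := by
    intro k
    have hs : Function.Surjective (rho a lam k) := by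
      rw [← LinearMap.range_eq_top]
      apply dstar k lam hl0
      · intro j hj t
        have hc : (if j < k then lam else 1) ≠ 0 := by split_ifs <;> simp [hl0]
        refine ⟨(if j < k then lam else 1)⁻¹ • Pi.single j t, ?_⟩
        rw [map_smul, rho_single, if_neg hj, smul_smul, inv_mul_cancel₀ hc, one_smul]
      · intro t
        exact ⟨Pi.single k t, by rw [rho_single, if_pos rfl]⟩
    have hq : ∀ v, (M k - 1) (π v) = π (Pi.single k (rho a lam k v)) := by
      intro v
      rw [LinearMap.sub_apply, hM, map_add, Module.End.one_apply, add_sub_cancel_left]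
    rw [← centEnd_affine (a k) (a k - 1) 1 (-1) one_ne_zero (by module),
      ← centEnd_affine (M k) (M k - 1) 1 (-1) one_ne_zero (by module)]
    refine cent_compare (a k - 1) (M k - 1) (a k - 1)
      (π ∘ₗ LinearMap.single ℂ (fun _ => T) k) ?_ rfl ?_ (a k - 1) (fun t => rfl)
      lam (lam - 1) hl0 ?_
    · ext u
      rw [LinearMap.mem_ker, LinearMap.mem_ker]
      change π (Pi.single k u) = 0 ↔ a k u - u = 0
      rw [hker, sub_eq_zero]
      constructor
      · rintro ⟨κ, l, hκ, hl, he⟩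
        have hlj : ∀ j, j ≠ k → a j (l j) = l j := by
          intro j hj
          have : l j = - κ j := by
            have := congrFun he j
            rw [Pi.single_eq_of_ne hj] at this
            exact eq_neg_of_add_eq_zero_right this.symm
          rw [this, map_neg, hκ]
        have hSl : ∀ m, tailS a m l = if m ≤ (k : ℕ) then a k (l k) - l k else 0 := by
          intro m
          rw [tailS_apply, Finset.sum_eq_single k]
          · intro b _ hb
            rw [hlj b hb]; simp
          · simp
        have hk : lam • a k (l k) = l k := by
          have := hl k
          rw [rho_apply, hSl, hSl, if_pos (Nat.zero_le _), if_neg (by omega)] at this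
          rw [← sub_eq_zero, ← this]
          module
        have hjk : ∀ j, j ≠ k → ∃ c : ℂ, l k = c • l j := by
          intro j hj
          have hj' : (j : ℕ) ≠ k := fun e => hj (Fin.ext e)
          have := hl j
          rw [rho_apply, hSl, hSl, if_pos (Nat.zero_le _), smul_sub, hk] at this
          by_cases hlt : (j : ℕ) + 1 ≤ k
          · rw [if_pos hlt] at this
            have h2 : (1 - lam) • (l k - lam • l j) = 0 := by
              linear_combination (norm := module) lam • this - (1 - lam) • hk
            refine ⟨lam, ?_⟩
            exact sub_eq_zero.1 ((smul_eq_zero.1 h2).resolve_left (sub_ne_zero.2 (Ne.symm hl1)))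
          · rw [if_neg hlt] at this
            have h2 : (1 - lam) • (l k - (1 : ℂ) • l j) = 0 := by
              rw [← this]; module
            refine ⟨1, ?_⟩
            exact sub_eq_zero.1 ((smul_eq_zero.1 h2).resolve_left (sub_ne_zero.2 (Ne.symm hl1)))
        have h0 : l k = 0 := by
          apply star k lam hl0 _ _ hk
          intro j hj
          obtain ⟨c, hc⟩ := hjk j hj
          rw [hc, map_smul, hlj j hj]
        have : u = κ k := by
          have := congrFun he k
          rw [Pi.single_eq_same, Pi.add_apply, h0, add_zero] at this
          exact this
        rw [this, hκ]
      · intro hu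
        refine ⟨Pi.single k u, 0, ?_, fun _ => map_zero _, (add_zero _).symm⟩
        intro j
        by_cases hj : j = k
        · subst hj; simpa using hu
        · simp [Pi.single_eq_of_ne hj]
    · apply le_antisymm
      · rintro _ ⟨u, rfl⟩
        obtain ⟨v, rfl⟩ := hs u
        exact ⟨π v, hq v⟩
      · rintro _ ⟨x, rfl⟩
        obtain ⟨v, rfl⟩ := hπ x
        exact ⟨rho a lam k v, (hq v).symm⟩
    · intro t
      change (M k - 1) (π (Pi.single k t)) = π (Pi.single k _)
      rw [hq, rho_single, if_pos rfl]
      congr 2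
      simp only [LinearMap.sub_apply, Module.End.one_apply]
      module
  -- comparison at infinity
  have hinf : (Module.finrank ℂ (centEnd (tailP a 0)) : ℤ) - ((Module.finrank ℂ T : ℤ)
        - (Module.finrank ℂ T - Module.finrank ℂ (LinearMap.ker (lam • tailP a 0 - 1)))) ^ 2
      = (Module.finrank ℂ (centEnd (tailP M 0)) : ℤ) - ((Module.finrank ℂ V : ℤ)
        - (Module.finrank ℂ T - Module.finrank ℂ (LinearMap.ker (lam • tailP a 0 - 1)))) ^ 2 := by
    have hs : Function.Surjective (tailS a 0) := by
      rw [← LinearMap.range_eq_top]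
      have hj : ∀ j t, a j t - t ∈ LinearMap.range (tailS a 0) := fun j t =>
        ⟨Pi.single j t, by rw [tailS_single, if_pos (Nat.zero_le _)]⟩
      apply dstar ⟨0, hr⟩ 1 one_ne_zero
      · intro j _ t; exact hj j t
      · intro t; rw [one_smul]; exact hj _ t
    have hq : ∀ v, (tailP M 0 - lam • 1) (π v) = π (Qm a (lam • tailS a 0 v)) := by
      intro v
      rw [LinearMap.sub_apply, prod_formula a lam π M hM v 0 (Nat.zero_le _)]
      simp only [Nat.zero_le, if_true, LinearMap.smul_apply, Module.End.one_apply]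
      rw [← map_smul, ← map_sub]
      congr 1
      ext j
      simp
    rw [← centEnd_affine (tailP a 0) (lam • tailP a 0 - 1) lam (-1) hl0 (by module),
      ← centEnd_affine (tailP M 0) (tailP M 0 - lam • 1) 1 (-lam) one_ne_zero (by module)]
    refine cent_compare (lam • tailP a 0 - 1) (tailP M 0 - lam • 1) (lam • tailP a 0 - 1)
      (π ∘ₗ Qm a) ?_ rfl ?_ (lam • tailP a 0 - 1) (fun t => rfl)
      1 (1 - lam) one_ne_zero ?_
    · ext s
      rw [LinearMap.mem_ker, LinearMap.mem_ker]
      change π (Qm a s) = 0 ↔ lam • tailP a 0 s - s = 0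
      rw [hker, sub_eq_zero]
      constructor
      · rintro ⟨κ, l, hκ, hl, he⟩
        obtain ⟨t, ht, rfl⟩ := (L_char a lam hl1 _).1 hl
        have h1 : Qm a (s - t) = κ := by rw [map_sub, he, add_sub_cancel_right]
        have h2 : ∀ m, m ≤ r → tailP a m (s - t) = s - t := by
          intro m hm
          induction hm using Nat.decreasingInduction with
          | self => rw [tailP_top]; rfl
          | of_succ k hk ih =>
            have h3 := hκ ⟨k, hk⟩
            rw [← h1, Qm_apply] at h3
            rw [tailP_step a k hk, Module.End.mul_apply]
            exact h3.trans ih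
        have h3 : ∀ j, a j (s - t) = s - t := by
          intro j
          have h3 := hκ j
          rw [← h1, Qm_apply, h2 _ (by omega)] at h3
          exact h3
        have h4 : s - t = 0 := by
          apply star ⟨0, hr⟩ 1 one_ne_zero _ (fun j _ => h3 j)
          rw [one_smul, h3]
        rw [sub_eq_zero.1 h4, ht]
      · intro h
        exact ⟨0, Qm a s, fun j => by simp, (L_char a lam hl1 _).2 ⟨s, h, rfl⟩, (zero_add _).symm⟩
    · apply le_antisymm
      · rintro _ ⟨u, rfl⟩
        obtain ⟨v, hv⟩ := hs (lam⁻¹ • u)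
        refine ⟨π v, ?_⟩
        rw [hq, hv, smul_smul, mul_inv_cancel₀ hl0, one_smul]
        rfl
      · rintro _ ⟨x, rfl⟩
        obtain ⟨v, rfl⟩ := hπ x
        exact ⟨lam • tailS a 0 v, (hq v).symm⟩
    · intro t
      change (tailP M 0 - lam • 1) (π (Qm a t)) = π (Qm a _)
      rw [hq, tailS_Qm a t 0 (Nat.zero_le _)]
      congr 2
      simp only [LinearMap.sub_apply, Module.End.one_apply, LinearMap.smul_apply]
      module
  have hprod : ∀ {W : Type _} [AddCommGroup W] [Module ℂ W] (b : Fin r → Module.End ℂ W),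
      (∀ k, IsUnit (b k)) → centEnd (Ring.inverse (List.ofFn b).prod) = centEnd (tailP b 0) := by
    intro W _ _ b hb
    rw [centEnd_inverse]
    · simp [tailP]
    · apply List.prod_isUnit
      intro x hx
      obtain ⟨k, rfl⟩ := (List.mem_ofFn' _ _).1 hx
      exact hb k
  have hprodV : centEnd (Ring.inverse (List.ofFn M).prod) = centEnd (tailP M 0) := by
    rw [centEnd_inverse]
    · simp [tailP]
    · apply List.prod_isUnit
      intro x hx
      obtain ⟨k, rfl⟩ := (List.mem_ofFn' _ _).1 hx
      exact hMunit k
  unfold rigIdx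
  rw [hprod a hunit, hprodV]
  have hsum : ∑ k, (Module.finrank ℂ (centEnd (M k)) : ℤ)
      = ∑ k, (Module.finrank ℂ (centEnd (a k)) : ℤ)
        + (r : ℤ) * ((Module.finrank ℂ V : ℤ) - Module.finrank ℂ T) ^ 2
        + 2 * ((Module.finrank ℂ V : ℤ) - Module.finrank ℂ T)
          * ∑ k, (Module.finrank ℂ (LinearMap.ker (a k - 1)) : ℤ) := by
    have : ∀ k, (Module.finrank ℂ (centEnd (M k)) : ℤ)
      = (Module.finrank ℂ (centEnd (a k)) : ℤ)
        + ((Module.finrank ℂ V : ℤ) - Module.finrank ℂ T) ^ 2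
        + 2 * ((Module.finrank ℂ V : ℤ) - Module.finrank ℂ T)
          * (Module.finrank ℂ (LinearMap.ker (a k - 1)) : ℤ) := by
      intro k
      linear_combination -(hloc k)
    rw [Finset.sum_congr rfl fun k _ => this k, Finset.sum_add_distrib, Finset.sum_add_distrib,
      ← Finset.mul_sum]
    simp
  rw [hsum]
  have hdim' : (Module.finrank ℂ V : ℤ) + ∑ k, (Module.finrank ℂ (LinearMap.ker (a k - 1)) : ℤ)
      + Module.finrank ℂ (LinearMap.ker (lam • tailP a 0 - 1)) = r * Module.finrank ℂ T := by
    exact_mod_cast hdim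
  have hZ : ∑ k, (Module.finrank ℂ (LinearMap.ker (a k - 1)) : ℤ) = r * Module.finrank ℂ T
    - Module.finrank ℂ V - Module.finrank ℂ (LinearMap.ker (lam • tailP a 0 - 1)) := by
    linarith
  rw [hZ]
  linear_combination -hinf

end conv

lemma rho_sum {T : Type*} [AddCommGroup T] [Module ℂ T] {r : ℕ} (a : Fin r → Module.End ℂ T)
    (lam : ℂ) (k : Fin r) (v : Fin r → T) :
    v k + rho a lam k v = ∑ j, (if j < k then lam • (a j (v j) - v j)
      else if j = k then lam • a k (v k) else a j (v j) - v j) := by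
  have h : v k + rho a lam k v = lam • tailS a 0 v + (1 - lam) • tailS a ((k : ℕ) + 1) v
      + ∑ j, (if j = k then lam • v k else 0) := by
    rw [rho_apply, Finset.sum_ite_eq' Finset.univ k, if_pos (Finset.mem_univ _)]
    module
  rw [h, tailS_apply, tailS_apply, Finset.smul_sum, Finset.smul_sum, ← Finset.sum_add_distrib,
    ← Finset.sum_add_distrib]
  refine Finset.sum_congr rfl fun j _ => ?_
  rw [if_pos (Nat.zero_le _)]
  rcases lt_trichotomy j k with hj | hj | hj
  · have : (j : ℕ) < k := hj
    rw [if_neg (by omega), if_neg hj.ne, if_pos hj]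
    module
  · subst hj
    rw [if_neg (by omega), if_pos rfl, if_neg (lt_irrefl _), if_pos rfl]
    module
  · have : (k : ℕ) < j := hj
    rw [if_pos (by omega), if_neg hj.ne', if_neg hj.asymm, if_neg hj.ne']
    module

lemma Bmat_mulVec {n r : ℕ} (A : Fin r → Matrix (Fin n) (Fin n) ℂ) (lam : ℂ) (k : Fin r)
    (v : Fin r → Fin n → ℂ) :
    Bmat A lam k *ᵥ ((LinearEquiv.curry ℂ ℂ (Fin r) (Fin n)).symm v)
      = (LinearEquiv.curry ℂ ℂ (Fin r) (Fin n)).symm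
        (v + Pi.single k (rho (fun k => (A k).mulVecLin) lam k v)) := by
  have hcs : ∀ v p, (LinearEquiv.curry ℂ ℂ (Fin r) (Fin n)).symm v p = v p.1 p.2 :=
    fun v p => rfl
  ext ⟨i, b⟩
  rw [hcs]
  simp only
  by_cases hi : i = k
  · subst hi
    rw [Pi.add_apply, Pi.single_eq_same, rho_sum, Finset.sum_apply]
    rw [Matrix.mulVec, dotProduct, Fintype.sum_prod_type]
    refine Finset.sum_congr rfl fun j _ => ?_
    have key : ((A j).mulVecLin (v j) - v j) b = ∑ x, (A j - 1) b x * v j x := by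
      rw [Matrix.mulVecLin_apply]
      nth_rewrite 2 [← one_mulVec (v j)]
      rw [← sub_mulVec]
      rfl
    simp only [hcs, Bmat, Matrix.of_apply, if_true]
    by_cases h1 : j < i
    · simp only [if_pos h1]
      rw [Pi.smul_apply, key, smul_eq_mul, Finset.mul_sum]
      simp only [mul_assoc]
    · simp only [if_neg h1]
      by_cases h2 : j = i
      · subst h2
        simp only [if_true]
        rw [Pi.smul_apply, Matrix.mulVecLin_apply, Matrix.mulVec, dotProduct, smul_eq_mul,
          Finset.mul_sum]
        simp only [mul_assoc]
      · simp only [if_neg h2]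
        rw [key]
  · rw [Pi.add_apply, Pi.single_eq_of_ne hi, add_zero]
    have : ∀ w : Fin r × Fin n → ℂ, (Bmat A lam k *ᵥ w) (i, b)
        = ((1 : Matrix (Fin r × Fin n) (Fin r × Fin n) ℂ) *ᵥ w) (i, b) := by
      intro w
      rw [Matrix.mulVec, Matrix.mulVec]
      congr 1
      ext q
      simp [Bmat, hi]
    rw [this, one_mulVec, hcs]

/-- **The middle convolution preserves the index of rigidity.** Let `A = (A_1, …, A_r)`
be an irreducible tuple in `GL_n(ℂ)` (with at least two members different from the
identity if `n = 1`) and `λ ∉ {0, 1}`. Then `i(A) = i(MC_λ(A))`. -/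
theorem middle_convolution_rigidity_index (n r : ℕ) (hn : 1 ≤ n) (hr : 1 ≤ r)
    (A : Fin r → Matrix (Fin n) (Fin n) ℂ)
    (hUnit : ∀ k, IsUnit (A k))
    (hIrr : IrredEndos fun k => (A k).mulVecLin)
    (hn1 : n = 1 → ∃ i j : Fin r, i ≠ j ∧ A i ≠ 1 ∧ A j ≠ 1)
    (lam : ℂ) (hl0 : lam ≠ 0) (hl1 : lam ≠ 1)
    (M : Fin r → Module.End ℂ (MCspace A lam))
    (hM : ∀ k, (M k).comp (Ksub A ⊔ Lsub A lam).mkQ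
        = ((Ksub A ⊔ Lsub A lam).mkQ).comp (Bmat A lam k).mulVecLin) :
    rigIdx (fun k => ((A k).mulVecLin : Module.End ℂ (Fin n → ℂ))) = rigIdx M := by
  classical
  let a : Fin r → Module.End ℂ (Fin n → ℂ) := fun k => (A k).mulVecLin
  have ha : ∀ k t, a k t = A k *ᵥ t := fun k t => rfl
  have haunit : ∀ k, IsUnit (a k) := fun k => (hUnit k).map (Matrix.toLinAlgEquiv' (R := ℂ) (n := Fin n))
  have hnt : ∀ (k : Fin r) (c : ℂ), c ≠ 0 → (∀ j, j ≠ k → ∀ t, a j t = t) →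
      (∀ t, c • a k t = t) → False := by
    intro k c hc h1 h2
    have h3 : ∀ U : Submodule ℂ (Fin n → ℂ), U = ⊥ ∨ U = ⊤ := by
      intro U
      apply hIrr U
      intro j v hv
      change a j v ∈ U
      by_cases hj : j = k
      · subst hj
        rw [← inv_smul_smul₀ hc (a j v), h2]
        exact U.smul_mem _ hv
      · rw [h1 j hj]; exact hv
    have hn' : n = 1 := by
      let e : Fin n → ℂ := Pi.single ⟨0, hn⟩ 1
      have he : e ≠ 0 := by simp [e]
      have h4 := finrank_span_singleton (K := ℂ) he
      rcases h3 (Submodule.span ℂ {e}) with h | h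
      · exact absurd (Submodule.span_singleton_eq_bot.1 h) he
      · rw [h, finrank_top] at h4
        simpa using h4
    obtain ⟨i, j, hij, hi, hj⟩ := hn1 hn'
    have h5 : ∀ j, j ≠ k → A j = 1 := by
      intro j hj
      apply Matrix.toLin'.injective
      apply LinearMap.ext
      intro t
      rw [Matrix.toLin'_apply, Matrix.toLin'_apply, one_mulVec]
      exact h1 j hj t
    by_cases hik : i = k
    · exact hj (h5 j (fun h => hij (hik.trans h.symm)))
    · exact hi (h5 i hik)
  have star : ∀ (k : Fin r) (c : ℂ), c ≠ 0 → ∀ t : Fin n → ℂ, (∀ j, j ≠ k → a j t = t) →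
      c • a k t = t → t = 0 := by
    intro k c hc t h1 h2
    let U : Submodule ℂ (Fin n → ℂ) :=
      (⨅ j : {j // j ≠ k}, LinearMap.ker (a j - 1)) ⊓ LinearMap.ker (c • a k - 1)
    have hU : ∀ t, t ∈ U ↔ (∀ j, j ≠ k → a j t = t) ∧ c • a k t = t := by
      intro t
      simp [U, Submodule.mem_iInf, sub_eq_zero]
    have hinv : ∀ j, ∀ v ∈ U, (A j).mulVecLin v ∈ U := by
      intro j v hv
      change a j v ∈ U
      by_cases hj : j = k
      · subst hj
        rw [← inv_smul_smul₀ hc (a j v), ((hU v).1 hv).2]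
        exact U.smul_mem _ hv
      · rw [((hU v).1 hv).1 j hj]; exact hv
    rcases hIrr U hinv with h | h
    · have : t ∈ U := (hU t).2 ⟨h1, h2⟩
      rw [h] at this
      simpa using this
    · have h' : ∀ t, t ∈ U := fun t => by rw [h]; trivial
      exact (hnt k c hc (fun j hj t => ((hU t).1 (h' t)).1 j hj)
        (fun t => ((hU t).1 (h' t)).2)).elim
  have dstar : ∀ (k : Fin r) (c : ℂ), c ≠ 0 → ∀ W : Submodule ℂ (Fin n → ℂ),
      (∀ j, j ≠ k → ∀ t, a j t - t ∈ W) → (∀ t, c • a k t - t ∈ W) → W = ⊤ := by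
    intro k c hc W h1 h2
    have hinv : ∀ j, ∀ v ∈ W, (A j).mulVecLin v ∈ W := by
      intro j v hv
      change a j v ∈ W
      by_cases hj : j = k
      · subst hj
        rw [← inv_smul_smul₀ hc (a j v)]
        apply W.smul_mem
        have := W.add_mem (h2 v) hv
        rwa [sub_add_cancel] at this
      · have := W.add_mem (h1 j hj v) hv
        rwa [sub_add_cancel] at this
    rcases hIrr W hinv with h | h
    · subst h
      exact (hnt k c hc (fun j hj t => sub_eq_zero.1 ((Submodule.mem_bot ℂ).1 (h1 j hj t)))
        (fun t => sub_eq_zero.1 ((Submodule.mem_bot ℂ).1 (h2 t)))).elim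
    · exact h
  let cur := LinearEquiv.curry ℂ ℂ (Fin r) (Fin n)
  have hcs : ∀ v p, cur.symm v p = v p.1 p.2 := fun v p => rfl
  have hB : ∀ k v, Bmat A lam k *ᵥ cur.symm v
      = cur.symm (v + Pi.single k (rho a lam k v)) := fun k v => Bmat_mulVec A lam k v
  let π : (Fin r → Fin n → ℂ) →ₗ[ℂ] MCspace A lam :=
    (Ksub A ⊔ Lsub A lam).mkQ ∘ₗ cur.symm.toLinearMap
  have hπ : ∀ v, π v = (Ksub A ⊔ Lsub A lam).mkQ (cur.symm v) := fun v => rfl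
  have hπs : Function.Surjective π :=
    (Submodule.mkQ_surjective _).comp cur.symm.surjective
  have hMB : ∀ k x, M k ((Ksub A ⊔ Lsub A lam).mkQ x)
      = (Ksub A ⊔ Lsub A lam).mkQ (Bmat A lam k *ᵥ x) := fun k x => LinearMap.congr_fun (hM k) x
  have hM' : ∀ k v, M k (π v) = π (v + Pi.single k (rho a lam k v)) := by
    intro k v
    rw [hπ, hπ, hMB, hB]
  have hK : ∀ v, cur.symm v ∈ Ksub A ↔ ∀ j, a j (v j) = v j := by
    intro v
    unfold Ksub
    rw [Submodule.mem_iInf]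
    refine forall_congr' fun j => ?_
    rw [LinearMap.mem_ker]
    change (A j - 1) *ᵥ (v j) = 0 ↔ _
    rw [sub_mulVec, one_mulVec, sub_eq_zero, ha]
  have hL : ∀ v, cur.symm v ∈ Lsub A lam ↔ ∀ k, rho a lam k v = 0 := by
    intro v
    unfold Lsub
    rw [Submodule.mem_iInf]
    refine forall_congr' fun k => ?_
    rw [LinearMap.mem_ker]
    change Bmat A lam k *ᵥ cur.symm v - cur.symm v = 0 ↔ _
    rw [hB, map_add, add_sub_cancel_left, LinearEquiv.map_eq_zero_iff, Pi.single_eq_zero_iff]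
  have hker : ∀ v, π v = 0 ↔ ∃ κ l : Fin r → Fin n → ℂ, (∀ j, a j (κ j) = κ j) ∧
      (∀ k, rho a lam k l = 0) ∧ v = κ + l := by
    intro v
    rw [hπ, Submodule.mkQ_apply, Submodule.Quotient.mk_eq_zero, Submodule.mem_sup]
    constructor
    · rintro ⟨y, hy, z, hz, h⟩
      refine ⟨cur y, cur z, (hK _).1 (by simpa using hy), (hL _).1 (by simpa using hz), ?_⟩
      apply cur.symm.injective
      rw [map_add]
      simpa using h.symm
    · rintro ⟨κ, l, hκ, hl, rfl⟩
      exact ⟨cur.symm κ, (hK _).2 hκ, cur.symm l, (hL _).2 hl, (map_add _ _ _).symm⟩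
  have hMunit : ∀ k, IsUnit (M k) := by
    intro k
    have hainj : Function.Injective (a k) := ((Module.End.isUnit_iff _).1 (haunit k)).1
    let Bk : Module.End ℂ (Fin r → Fin n → ℂ) :=
      LinearMap.id + LinearMap.single ℂ (fun _ => (Fin n → ℂ)) k ∘ₗ rho a lam k
    have hBk : ∀ v, Bk v = v + Pi.single k (rho a lam k v) := fun v => rfl
    have hinj : Function.Injective Bk := by
      rw [← LinearMap.ker_eq_bot, LinearMap.ker_eq_bot']
      intro v hv
      rw [hBk] at hv
      have h1 : v = Pi.single k (v k) := by
        ext1 j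
        by_cases hj : j = k
        · subst hj; simp
        · have := congrFun hv j
          rw [Pi.add_apply, Pi.single_eq_of_ne hj, add_zero] at this
          rw [this, Pi.single_eq_of_ne hj]; rfl
      have h2 := congrFun hv k
      rw [Pi.add_apply, Pi.single_eq_same, h1, rho_single, if_pos rfl, Pi.single_eq_same,
        add_sub_cancel] at h2
      have h3 : a k (v k) = 0 := (smul_eq_zero.1 h2).resolve_left hl0
      have h4 : v k = 0 := hainj (by rw [h3, map_zero])
      rw [h1, h4, Pi.single_zero]
    have hsurj := LinearMap.injective_iff_surjective.1 hinj
    have hMs : Function.Surjective (M k) := by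
      intro x
      obtain ⟨v, rfl⟩ := hπs x
      obtain ⟨w, rfl⟩ := hsurj v
      exact ⟨π w, hM' k w⟩
    exact (Module.End.isUnit_iff _).2 ⟨LinearMap.injective_iff_surjective.2 hMs, hMs⟩
  exact abstract_main a lam hr hl0 hl1 haunit star dstar π hπs hker M hM' hMunit

end
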